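/- arXiv:2009.04757 — 2 statements merged into one kernel-verified Lean document; each statement's English description precedes it below -/
import Mathlib

section
/- Let (T,X) be a topological dynamical system, x ∈ X, and let ν be an ergodic T-invariant Borel probability measure on X. If ν is the only measure for which x is logarithmically quasi-generic (i.e., (1/log N) Σ_{n≤N} (1/n) δ_{T^n x} → ν in the weak-* topology as N → ∞), then there exists a set A ⊆ ℕ of logarithmic density 1 such that (1/N) Σ_{n≤N} δ_{T^n x} → ν in the weak-* topology as N → ∞ along N ∈ A. -/
open Filter Topology MeasureTheory

open scoped BoundedContinuousFunction ENNReal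
open TopologicalSpace (PseudoMetrizableSpace SeparableSpace)

/-!
Let `F` be the average of `f` along orbit segments of a fixed length `H`. The Cesàro means of `F`
and `f` along the orbit of `x` have the same asymptotics, so the distance from the Cesàro mean of
`f` to `c = ∫ f ∂ν` is at most the Cesàro mean of `|F - c|`, up to an error tending to `0`. The
logarithmic mean of a Cesàro mean of a nonnegative sequence is at most twice the logarithmic mean
of the sequence, by exchanging the sums. The logarithmic mean of `|F - c|` along the orbit tends to
`∫ |F - c| ∂ν`, which the mean ergodic theorem makes arbitrarily small as `H → ∞`. By Markov's
inequality the empirical measures thus converge to `ν` along the filter of sets of logarithmic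
density one. The weak topology on probability measures is metrizable, so diagonalising over
countably many neighbourhoods of `ν` gives one set along which they converge.
-/

section LogMean

/-- The logarithmic mean `(1 / log N) ∑_{1 ≤ n ≤ N} u n / n`, equal to `0` for `N ≤ 1`. -/
noncomputable def logMean (u : ℕ → ℝ) (N : ℕ) : ℝ :=
  (1 / Real.log N) * ∑ n ∈ Finset.Icc 1 N, u n / n

/-- The Cesàro mean `(1 / N) ∑_{1 ≤ n ≤ N} u n`, equal to `0` at `N = 0`. -/
noncomputable def cesaroMean (u : ℕ → ℝ) (N : ℕ) : ℝ :=
  (1 / (N : ℝ)) * ∑ n ∈ Finset.Icc 1 N, u n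

theorem logMean_le_logMean {u v : ℕ → ℝ} {N : ℕ} (h : ∀ n ∈ Finset.Icc 1 N, u n ≤ v n) :
    logMean u N ≤ logMean v N := by
  have := Real.log_natCast_nonneg N
  unfold logMean
  gcongr with n hn
  exact h n hn

theorem logMean_nonneg {u : ℕ → ℝ} (hu : 0 ≤ u) (N : ℕ) : 0 ≤ logMean u N :=
  mul_nonneg (one_div_nonneg.2 (Real.log_natCast_nonneg N))
    (Finset.sum_nonneg fun n _ => div_nonneg (hu n) n.cast_nonneg)

theorem logMean_add (u v : ℕ → ℝ) (N : ℕ) : logMean (u + v) N = logMean u N + logMean v N := by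
  simp only [logMean, Pi.add_apply, add_div, Finset.sum_add_distrib, mul_add]

theorem logMean_const_mul (c : ℝ) (u : ℕ → ℝ) (N : ℕ) :
    logMean (fun n => c * u n) N = c * logMean u N := by
  simp only [logMean, mul_div_assoc, ← Finset.mul_sum, mul_left_comm c]

theorem logMean_one_eq_harmonic_div_log (N : ℕ) : logMean 1 N = harmonic N / Real.log N := by
  simp [logMean, harmonic_eq_sum_Icc, div_eq_inv_mul]

theorem tendsto_logMean_one : Tendsto (logMean 1) atTop (𝓝 1) := by
  have hlog : Tendsto (fun N : ℕ => Real.log N) atTop atTop :=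
    Real.tendsto_log_atTop.comp tendsto_natCast_atTop_atTop
  have hupper : Tendsto (fun N : ℕ => (Real.log N)⁻¹ + 1) atTop (𝓝 1) := by
    simpa using hlog.inv_tendsto_atTop.add_const 1
  refine tendsto_of_tendsto_of_tendsto_of_le_of_le' tendsto_const_nhds hupper ?_ ?_ <;>
    filter_upwards [hlog.eventually_gt_atTop 0, eventually_gt_atTop 0] with N hN hN₀ <;>
    rw [logMean_one_eq_harmonic_div_log]
  · rw [one_le_div hN]
    refine le_trans ?_ (log_add_one_le_harmonic N)
    gcongr
    simp
  · rw [div_le_iff₀ hN, add_mul, inv_mul_cancel₀ hN.ne', one_mul]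
    exact harmonic_le_one_add_log N

theorem sum_Icc_one_eq_sum_range {M : Type*} [AddCommMonoid M] (f : ℕ → M) (N : ℕ) :
    ∑ n ∈ Finset.Icc 1 N, f n = ∑ n ∈ Finset.range N, f (n + 1) := by
  rw [Finset.range_eq_Ico, Finset.sum_Ico_add' f 0 N 1]
  rfl

theorem tendsto_logMean_zero {u : ℕ → ℝ} (hu : Tendsto u atTop (𝓝 0)) :
    Tendsto (logMean u) atTop (𝓝 0) := by
  let w (n : ℕ) : ℝ := 1 / ((n : ℝ) + 1)
  have hw : Tendsto (fun N => ∑ n ∈ Finset.range N, w n) atTop atTop :=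
    Real.tendsto_sum_range_one_div_nat_succ_atTop
  have hlittle : (fun n => u (n + 1) * w n) =o[atTop] w := by
    simpa using ((Asymptotics.isLittleO_one_iff ℝ).2
      ((tendsto_add_atTop_iff_nat 1).2 hu)).mul_isBigO (Asymptotics.isBigO_refl w atTop)
  have hratio := (hlittle.sum_range (fun n => by positivity) hw).tendsto_div_nhds_zero
  have hprod := hratio.mul tendsto_logMean_one
  rw [zero_mul] at hprod
  refine hprod.congr' ?_
  filter_upwards [hw.eventually_gt_atTop 0] with N hN
  have hu_sum : logMean u N = 1 / Real.log N * ∑ n ∈ Finset.range N, u (n + 1) * w n := by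
    simp [logMean, sum_Icc_one_eq_sum_range, w, div_eq_mul_inv]
  have hone_sum : logMean 1 N = 1 / Real.log N * ∑ n ∈ Finset.range N, w n := by
    simp [logMean, sum_Icc_one_eq_sum_range, w]
  rw [hu_sum, hone_sum]
  field_simp

theorem logMean_cesaroMean_le {u : ℕ → ℝ} (hu : 0 ≤ u) (N : ℕ) :
    logMean (cesaroMean u) N ≤ 2 * logMean u N := by
  have hswap : ∑ m ∈ Finset.Icc 1 N, cesaroMean u m / m =
      ∑ n ∈ Finset.Icc 1 N, u n * ∑ m ∈ Finset.Icc n N, ((m : ℝ) ^ 2)⁻¹ := by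
    simp only [cesaroMean, Finset.mul_sum, Finset.sum_div]
    rw [Finset.sum_comm' (t' := Finset.Icc 1 N) (s' := fun n => Finset.Icc n N)
      (by simp only [Finset.mem_Icc]; omega)]
    refine Finset.sum_congr rfl fun n _ => Finset.sum_congr rfl fun m _ => ?_
    ring
  have htail : ∀ n ∈ Finset.Icc 1 N, ∑ m ∈ Finset.Icc n N, ((m : ℝ) ^ 2)⁻¹ ≤ 2 / n := by
    intro n hn
    obtain ⟨k, rfl⟩ := Nat.exists_eq_add_of_le' (Finset.mem_Icc.1 hn).1
    exact_mod_cast sum_Ioo_inv_sq_le (α := ℝ) k (N + 1)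
  have := Real.log_natCast_nonneg N
  calc logMean (cesaroMean u) N
      = 1 / Real.log N * ∑ n ∈ Finset.Icc 1 N, u n * ∑ m ∈ Finset.Icc n N, ((m : ℝ) ^ 2)⁻¹ := by
        rw [logMean, hswap]
    _ ≤ 1 / Real.log N * ∑ n ∈ Finset.Icc 1 N, u n * (2 / n) := by
        gcongr with n hn
        exacts [hu n, htail n hn]
    _ = 2 * logMean u N := by
        rw [← logMean_const_mul, logMean]
        congr! 2
        ring

theorem abs_cesaroMean_sub_le (u : ℕ → ℝ) (c : ℝ) {N : ℕ} (hN : N ≠ 0) :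
    |cesaroMean u N - c| ≤ cesaroMean (fun n => |u n - c|) N := by
  have hsub : cesaroMean u N - c = 1 / N * ∑ n ∈ Finset.Icc 1 N, (u n - c) := by
    simp [cesaroMean, Finset.sum_sub_distrib, mul_sub, hN]
  rw [hsub, abs_mul, abs_of_nonneg (by positivity)]
  exact mul_le_mul_of_nonneg_left (Finset.abs_sum_le_sum_abs _ _) (by positivity)

theorem logMean_abs_cesaroMean_sub_le (u v : ℕ → ℝ) (c : ℝ) (N : ℕ) :
    logMean (fun M => |cesaroMean u M - c|) N ≤
      2 * logMean (fun n => |v n - c|) N +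
        logMean (fun M => |cesaroMean v M - cesaroMean u M|) N := by
  have hpoint : ∀ M ∈ Finset.Icc 1 N, |cesaroMean u M - c| ≤
      cesaroMean (fun n => |v n - c|) M + |cesaroMean v M - cesaroMean u M| := fun M hM => by
    have htriangle := abs_sub_le (cesaroMean u M) (cesaroMean v M) c
    rw [abs_sub_comm (cesaroMean u M) (cesaroMean v M)] at htriangle
    linarith [abs_cesaroMean_sub_le v c (Nat.one_le_iff_ne_zero.1 (Finset.mem_Icc.1 hM).1)]
  calc logMean (fun M => |cesaroMean u M - c|) N
      ≤ logMean (cesaroMean fun n => |v n - c|) N +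
          logMean (fun M => |cesaroMean v M - cesaroMean u M|) N :=
        (logMean_le_logMean hpoint).trans (logMean_add _ _ N).le
    _ ≤ _ := by
        gcongr
        exact logMean_cesaroMean_le (fun _ => abs_nonneg _) N

end LogMean

section LogDensity

theorem logMean_indicator_one (A : Set ℕ) (N : ℕ) :
    logMean (A.indicator 1) N =
      1 / Real.log N * ∑ n ∈ Finset.Icc 1 N, A.indicator (fun n : ℕ => (1 / n : ℝ)) n := by
  classical simp only [logMean, Set.indicator_apply, Pi.one_apply, ite_div, zero_div]

theorem logMean_indicator_one_nonneg (B : Set ℕ) (N : ℕ) : 0 ≤ logMean (B.indicator 1) N :=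
  logMean_nonneg (Set.indicator_nonneg fun _ _ => zero_le_one) N

theorem logMean_indicator_one_le_logMean {B : Set ℕ} {u : ℕ → ℝ} {N : ℕ} (hu : 0 ≤ u)
    (h : ∀ n ∈ Finset.Icc 1 N, n ∈ B → 1 ≤ u n) : logMean (B.indicator 1) N ≤ logMean u N :=
  logMean_le_logMean fun n hn => Set.indicator_apply_le' (h n hn) fun _ => hu n

theorem logMean_indicator_one_union_le (B C : Set ℕ) (N : ℕ) :
    logMean ((B ∪ C).indicator 1) N ≤ logMean (B.indicator 1) N + logMean (C.indicator 1) N := by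
  rw [← logMean_add]
  refine logMean_le_logMean fun n _ => ?_
  by_cases hnB : n ∈ B <;> by_cases hnC : n ∈ C <;> simp [hnB, hnC]

/-- The filter of sets of natural numbers of logarithmic density one, encoded by the complement
having logarithmic density zero. -/
def logDensityOne : Filter ℕ :=
  .comk (fun B => Tendsto (logMean (B.indicator 1)) atTop (𝓝 0))
    (by
      simp only [Set.indicator_empty]
      exact tendsto_logMean_zero tendsto_const_nhds)
    (fun _ hB C hCB => squeeze_zero (logMean_indicator_one_nonneg C)
      (fun _ => logMean_indicator_one_le_logMean (Set.indicator_nonneg fun _ _ => zero_le_one)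
        fun n _ hn => by simp [hCB hn]) hB)
    (fun B hB C hC => squeeze_zero (logMean_indicator_one_nonneg (B ∪ C))
      (logMean_indicator_one_union_le B C)
      (by simpa using hB.add hC))

theorem mem_logDensityOne {A : Set ℕ} :
    A ∈ logDensityOne ↔ Tendsto (logMean (Aᶜ.indicator 1)) atTop (𝓝 0) :=
  mem_comk

theorem tendsto_logMean_indicator_one {A : Set ℕ} (hA : A ∈ logDensityOne) :
    Tendsto (logMean (A.indicator 1)) atTop (𝓝 1) := by
  have hsub := tendsto_logMean_one.sub (mem_logDensityOne.1 hA)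
  rw [sub_zero] at hsub
  refine hsub.congr fun N => ?_
  rw [sub_eq_iff_eq_add, ← logMean_add, Set.indicator_self_add_compl]

theorem logDensityOne_le_atTop : logDensityOne ≤ atTop := by
  refine fun A hA => mem_logDensityOne.2 (tendsto_logMean_zero (tendsto_const_nhds.congr' ?_))
  filter_upwards [hA] with n hn
  simp [hn]

theorem tendsto_logDensityOne_zero {u : ℕ → ℝ} (hu : 0 ≤ u)
    (hmean : Tendsto (logMean u) atTop (𝓝 0)) : Tendsto u logDensityOne (𝓝 0) := by
  refine (nhds_basis_abs_sub_lt (0 : ℝ)).tendsto_right_iff.2 fun ε hε => mem_logDensityOne.2 ?_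
  refine squeeze_zero (logMean_indicator_one_nonneg _) (fun N => ?_)
    (by simpa using hmean.const_mul ε⁻¹)
  rw [← logMean_const_mul]
  refine logMean_indicator_one_le_logMean (fun n => mul_nonneg (inv_nonneg.2 hε.le) (hu n))
    fun n _ hn => ?_
  have hεu : ε ≤ u n := by simpa [abs_of_nonneg (hu n)] using hn
  rwa [← div_eq_inv_mul, one_le_div hε]

-- Let `K N` be the last `k` such that `(S k)ᶜ` has logarithmic density below `1 / (k + 1)` from `N`
-- on. Below `N`, the complement of the diagonal set is contained in `(S (K N))ᶜ`.
theorem exists_mem_logDensityOne_forall_eventually {S : ℕ → Set ℕ} (hanti : Antitone S)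
    (hS : ∀ k, S k ∈ logDensityOne) :
    ∃ A ∈ logDensityOne, ∀ k, ∀ᶠ n in atTop ⊓ 𝓟 A, n ∈ S k := by
  obtain ⟨φ, hφ, hsmall⟩ : ∃ φ : ℕ → ℕ, StrictMono φ ∧
      ∀ k, ∀ N ≥ φ k, logMean ((S k)ᶜ.indicator 1) N < 1 / ((k : ℝ) + 1) :=
    extraction_forall_of_eventually fun k => eventually_forall_ge_atTop.2 <|
      (mem_logDensityOne.1 (hS k)).eventually (gt_mem_nhds Nat.one_div_pos_of_nat)
  let K (N : ℕ) : ℕ := Nat.findGreatest (φ · ≤ N) N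
  have hle_K {k N : ℕ} (h : φ k ≤ N) : k ≤ K N := Nat.le_findGreatest ((hφ.id_le k).trans h) h
  have hφK {N : ℕ} (h : φ 0 ≤ N) : φ (K N) ≤ N :=
    Nat.findGreatest_spec (P := (φ · ≤ N)) N.zero_le h
  have hK : Tendsto K atTop atTop :=
    tendsto_atTop.2 fun k => (eventually_ge_atTop (φ k)).mono fun _ => hle_K
  refine ⟨{n | ∀ k, φ k ≤ n → n ∈ S k}, mem_logDensityOne.2 ?_, fun k => ?_⟩
  · refine squeeze_zero' (.of_forall (logMean_indicator_one_nonneg _)) ?_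
      (tendsto_one_div_add_atTop_nhds_zero_nat.comp hK)
    filter_upwards [eventually_ge_atTop (φ 0)] with N hN
    refine (logMean_indicator_one_le_logMean (Set.indicator_nonneg fun _ _ => zero_le_one)
      fun n hn hnA => ?_).trans (hsmall (K N) N (hφK hN)).le
    obtain ⟨k, hkn, hnS⟩ : ∃ k, φ k ≤ n ∧ n ∉ S k := by simpa using hnA
    have hkK : k ≤ K N := hle_K (hkn.trans (Finset.mem_Icc.1 hn).2)
    rw [Set.indicator_of_mem (show n ∈ (S (K N))ᶜ from fun h => hnS (hanti hkK h))]
  · filter_upwards [(eventually_ge_atTop (φ k)).filter_mono inf_le_left,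
      mem_inf_of_right (mem_principal_self _)] with n hn hnA using hnA k hn

theorem exists_mem_logDensityOne_tendsto {α : Type*} {l : Filter α} [l.IsCountablyGenerated]
    {g : ℕ → α} (hg : Tendsto g logDensityOne l) :
    ∃ A ∈ logDensityOne, Tendsto g (atTop ⊓ 𝓟 A) l := by
  obtain ⟨U, hU⟩ := l.exists_antitone_basis
  obtain ⟨A, hA, hAU⟩ := exists_mem_logDensityOne_forall_eventually
    (S := fun k => g ⁻¹' U k) (fun _ _ h => Set.preimage_mono (hU.antitone h))
    fun k => hg (hU.mem k)
  exact ⟨A, hA, hU.tendsto_right_iff.2 fun k _ => hAU k⟩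

end LogDensity

section MeanErgodic

variable {α E : Type*} [MeasurableSpace α] {μ : Measure α} [NormedAddCommGroup E]

theorem memLp_birkhoffAverage [NormedSpace ℝ E] {p : ℝ≥0∞} {T : α → α} {f : α → E}
    (hT : MeasurePreserving T μ μ) (hf : MemLp f p μ) (n : ℕ) :
    MemLp (birkhoffAverage ℝ T f n) p μ :=
  (memLp_finsetSum _ fun k _ => hf.comp_measurePreserving (hT.iterate k)).const_smul _

theorem toLp_birkhoffAverage [NormedSpace ℝ E] {p : ℝ≥0∞} {T : α → α} {f : α → E}
    (hT : MeasurePreserving T μ μ) (hf : MemLp f p μ) (n : ℕ) :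
    (memLp_birkhoffAverage hT hf n).toLp _ =
      birkhoffAverage ℝ (Lp.compMeasurePreserving T hT) _root_.id n (hf.toLp f) := by
  have hiter (k : ℕ) : (Lp.compMeasurePreserving T hT)^[k] (hf.toLp f) =
      (hf.comp_measurePreserving (hT.iterate k)).toLp _ := by
    rw [Lp.compMeasurePreserving_iterate]
    rfl
  have hsum := Lp.coeFn_finsetSum (Finset.range n)
    fun k => (hf.comp_measurePreserving (hT.iterate k)).toLp _
  simp only [birkhoffAverage, birkhoffSum, hiter, _root_.id]
  refine Lp.ext ((MemLp.coeFn_toLp _).trans (.trans ?_ (Lp.coeFn_smul _ _).symm))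
  filter_upwards [hsum, eventually_countable_forall.2 fun k =>
    (hf.comp_measurePreserving (hT.iterate k)).coeFn_toLp] with a hsuma hk
  simp only [birkhoffAverage, birkhoffSum, Pi.smul_apply, hsuma, Finset.sum_apply, hk,
    Function.comp_apply]

theorem exists_ae_eq_const_of_compMeasurePreserving_eq {p : ℝ≥0∞} {T : α → α} (hT : Ergodic T μ)
    {g : Lp E p μ} (hg : Lp.compMeasurePreserving T hT.toMeasurePreserving g = g) :
    ∃ c : E, g =ᵐ[μ] Function.const α c := by
  have hcomp := Lp.coeFn_compMeasurePreserving g hT.toMeasurePreserving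
  rw [hg] at hcomp
  exact hT.ae_eq_const_of_ae_eq_comp_ae (Lp.aestronglyMeasurable g) hcomp.symm

theorem inner_toLp_sub_const_integral_eq_zero [InnerProductSpace ℝ E] [CompleteSpace E]
    [IsProbabilityMeasure μ] {T : α → α} {f : α → E} (hT : Ergodic T μ) (hf : MemLp f 2 μ)
    {g : Lp E 2 μ} (hg : Lp.compMeasurePreserving T hT.toMeasurePreserving g = g) :
    inner ℝ (hf.toLp f - Lp.const 2 μ (∫ a, f a ∂μ)) g = 0 := by
  obtain ⟨c, hc⟩ := exists_ae_eq_const_of_compMeasurePreserving_eq hT hg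
  have hint : Integrable f μ := hf.integrable one_le_two
  set m := ∫ a, f a ∂μ with hm
  calc inner ℝ (hf.toLp f - Lp.const 2 μ m) g
      = ∫ a, inner ℝ c (f a - m) ∂μ := by
        rw [L2.inner_def]
        refine integral_congr_ae ?_
        filter_upwards [hc, hf.coeFn_toLp, Lp.coeFn_const (p := 2) (μ := μ) (c := m),
          Lp.coeFn_sub (hf.toLp f) (Lp.const 2 μ m)] with a hga hfa hma hsub
        rw [hsub, Pi.sub_apply, hga, hfa, hma, real_inner_comm]
        rfl
    _ = 0 := by
        rw [integral_inner (f := fun a => f a - m) (hint.sub (integrable_const m)),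
          integral_sub hint (integrable_const m)]
        simp [hm]

theorem tendsto_birkhoffAverage_of_inner_sub_eq_zero {𝕜 H : Type*} [RCLike 𝕜]
    [NormedAddCommGroup H] [InnerProductSpace 𝕜 H] [CompleteSpace H] (U : H →ₗᵢ[𝕜] H) {x y : H}
    (hy : U y = y) (hxy : ∀ z, U z = z → inner 𝕜 (x - y) z = 0) :
    Tendsto (birkhoffAverage 𝕜 U _root_.id · x) atTop (𝓝 y) := by
  have hlim := U.toContinuousLinearMap.tendsto_birkhoffAverage_orthogonalProjection
    U.norm_toContinuousLinearMap_le x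
  rwa [← Submodule.starProjection_apply,
    Submodule.eq_starProjection_of_mem_of_inner_eq_zero hy hxy] at hlim

theorem tendsto_eLpNorm_birkhoffAverage_sub_integral [InnerProductSpace ℝ E] [CompleteSpace E]
    [IsProbabilityMeasure μ] {T : α → α} {f : α → E} (hT : Ergodic T μ) (hf : MemLp f 2 μ) :
    Tendsto (fun n => eLpNorm (birkhoffAverage ℝ T f n - fun _ => ∫ a, f a ∂μ) 2 μ)
      atTop (𝓝 0) := by
  have hlim := tendsto_birkhoffAverage_of_inner_sub_eq_zero
    (Lp.compMeasurePreservingₗᵢ ℝ T hT.toMeasurePreserving : Lp E 2 μ →ₗᵢ[ℝ] Lp E 2 μ) rfl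
    fun _ hg => inner_toLp_sub_const_integral_eq_zero hT hf hg
  refine (Lp.tendsto_Lp_iff_tendsto_eLpNorm'' _ (memLp_birkhoffAverage hT.toMeasurePreserving hf) _
    (memLp_const _)).1 ?_
  simp only [toLp_birkhoffAverage hT.toMeasurePreserving hf]
  exact hlim

theorem tendsto_integral_norm_birkhoffAverage_sub_integral [InnerProductSpace ℝ E] [CompleteSpace E]
    [IsProbabilityMeasure μ] {T : α → α} {f : α → E} (hT : Ergodic T μ) (hf : MemLp f 2 μ) :
    Tendsto (fun n => ∫ a, ‖birkhoffAverage ℝ T f n a - ∫ b, f b ∂μ‖ ∂μ) atTop (𝓝 0) := by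
  have hmem (n : ℕ) : AEStronglyMeasurable (birkhoffAverage ℝ T f n - fun _ => ∫ a, f a ∂μ) μ :=
    ((memLp_birkhoffAverage hT.toMeasurePreserving hf n).sub (memLp_const _)).1
  have hL1 : Tendsto (fun n => eLpNorm (birkhoffAverage ℝ T f n - fun _ => ∫ a, f a ∂μ) 1 μ)
      atTop (𝓝 0) :=
    tendsto_of_tendsto_of_tendsto_of_le_of_le tendsto_const_nhds
      (tendsto_eLpNorm_birkhoffAverage_sub_integral hT hf) (fun _ => zero_le)
      fun n => eLpNorm_le_eLpNorm_of_exponent_le one_le_two (hmem n)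
  have hreal := (ENNReal.tendsto_toReal ENNReal.zero_ne_top).comp hL1
  rw [ENNReal.toReal_zero] at hreal
  refine hreal.congr fun n => ?_
  rw [Function.comp_apply, eLpNorm_one_eq_lintegral_enorm,
    ← integral_norm_eq_lintegral_enorm (hmem n)]
  rfl

end MeanErgodic

section BirkhoffAverage

theorem birkhoffAverage_birkhoffAverage_comm {R α M : Type*} [DivisionSemiring R]
    [AddCommMonoid M] [Module R M] (T : α → α) (f : α → M) (m n : ℕ) :
    birkhoffAverage R T (birkhoffAverage R T f m) n =
      birkhoffAverage R T (birkhoffAverage R T f n) m := by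
  ext a
  simp only [birkhoffAverage, birkhoffSum, ← Finset.smul_sum, ← Function.iterate_add_apply]
  rw [Finset.sum_comm, smul_smul, smul_smul, ((Nat.cast_commute n (m : R)⁻¹).inv_left₀).eq]
  simp only [add_comm]

theorem tendsto_birkhoffAverage_iterate_sub_birkhoffAverage (𝕜 : Type*) {α E : Type*} [RCLike 𝕜]
    [NormedAddCommGroup E] [NormedSpace 𝕜 E] {f : α → E}
    (hf : Bornology.IsBounded (Set.range f)) (T : α → α) (k : ℕ) (a : α) :
    Tendsto (fun N => birkhoffAverage 𝕜 T f N (T^[k] a) - birkhoffAverage 𝕜 T f N a)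
      atTop (𝓝 0) := by
  induction k with
  | zero => simp
  | succ k ih =>
    simpa [Function.iterate_succ_apply'] using
      (tendsto_birkhoffAverage_apply_sub_birkhoffAverage' 𝕜 hf T (T^[k] a)).add ih

theorem tendsto_birkhoffAverage_birkhoffAverage_sub (𝕜 : Type*) {α E : Type*} [RCLike 𝕜]
    [NormedAddCommGroup E] [NormedSpace 𝕜 E] {f : α → E}
    (hf : Bornology.IsBounded (Set.range f)) (T : α → α) {H : ℕ} (hH : H ≠ 0) (a : α) :
    Tendsto (fun N => birkhoffAverage 𝕜 T (birkhoffAverage 𝕜 T f H) N a -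
      birkhoffAverage 𝕜 T f N a) atTop (𝓝 0) := by
  have hsum := (tendsto_finsetSum (Finset.range H) fun k _ =>
    tendsto_birkhoffAverage_iterate_sub_birkhoffAverage 𝕜 hf T k a).const_smul (H : 𝕜)⁻¹
  rw [Finset.sum_const_zero, smul_zero] at hsum
  refine hsum.congr fun N => ?_
  rw [birkhoffAverage_birkhoffAverage_comm, Finset.sum_sub_distrib, Finset.sum_const,
    Finset.card_range, smul_sub, ← Nat.cast_smul_eq_nsmul 𝕜, inv_smul_smul₀ (Nat.cast_ne_zero.2 hH)]
  rfl

end BirkhoffAverage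

section Generic

variable {X : Type*}

theorem cesaroMean_iterate_eq_birkhoffAverage (T : X → X) (f : X → ℝ) (x : X) (N : ℕ) :
    cesaroMean (fun n => f (T^[n] x)) N = birkhoffAverage ℝ T f N (T x) := by
  simp only [cesaroMean, birkhoffAverage, birkhoffSum, sum_Icc_one_eq_sum_range,
    ← Function.iterate_succ_apply, one_div, smul_eq_mul]

theorem tendsto_cesaroMean_birkhoffAverage_sub {T : X → X} {f : X → ℝ}
    (hf : Bornology.IsBounded (Set.range f)) {H : ℕ} (hH : H ≠ 0) (x : X) :
    Tendsto (fun N => cesaroMean (fun n => birkhoffAverage ℝ T f H (T^[n] x)) N -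
      cesaroMean (fun n => f (T^[n] x)) N) atTop (𝓝 0) := by
  simpa only [cesaroMean_iterate_eq_birkhoffAverage] using
    tendsto_birkhoffAverage_birkhoffAverage_sub ℝ hf T hH (T x)

variable [TopologicalSpace X]

theorem exists_boundedContinuousFunction_eq_birkhoffAverage {T : X → X} (hT : Continuous T)
    (f : X →ᵇ ℝ) (H : ℕ) : ∃ F : X →ᵇ ℝ, ⇑F = birkhoffAverage ℝ T f H := by
  refine ⟨(H : ℝ)⁻¹ • ∑ h ∈ Finset.range H, f.compContinuous ⟨T^[h], hT.iterate h⟩, ?_⟩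
  ext x
  simp [birkhoffAverage, birkhoffSum]

variable [MeasurableSpace X]

/-- The logarithmic empirical measures of the orbit of `x` converge weakly to `ν`, as tested against
bounded continuous functions. In a compact space this says that `ν` is the only measure for which
`x` is logarithmically quasi-generic. -/
def IsLogGeneric (T : X → X) (x : X) (ν : Measure X) : Prop :=
  ∀ f : X →ᵇ ℝ, Tendsto (logMean fun n => f (T^[n] x)) atTop (𝓝 (∫ y, f y ∂ν))

theorem exists_probabilityMeasure_integral_eq_cesaroMean [OpensMeasurableSpace X] (y : ℕ → X)
    {N : ℕ} (hN : N ≠ 0) :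
    ∃ μ : ProbabilityMeasure X, ∀ f : X →ᵇ ℝ, ∫ a, f a ∂μ = cesaroMean (fun n => f (y n)) N := by
  have hprob : IsProbabilityMeasure
      ((N : ℝ≥0∞)⁻¹ • ∑ n ∈ Finset.Icc 1 N, Measure.dirac (y n)) := by
    constructor
    simp [ENNReal.inv_mul_cancel (Nat.cast_ne_zero.2 hN) (ENNReal.natCast_ne_top N)]
  refine ⟨⟨_, hprob⟩, fun f => ?_⟩
  rw [ProbabilityMeasure.coe_mk, integral_smul_measure,
    integral_finsetSum_measure fun n _ => f.integrable _]
  simp [cesaroMean, integral_dirac' _ _ f.continuous.stronglyMeasurable]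

variable {T : X → X} {x : X} {ν : Measure X} [IsProbabilityMeasure ν]

theorem exists_integral_abs_birkhoffAverage_sub_lt [OpensMeasurableSpace X] (hErg : Ergodic T ν)
    (f : X →ᵇ ℝ) {ε : ℝ} (hε : 0 < ε) :
    ∃ H ≠ 0, ∫ y, |birkhoffAverage ℝ T f H y - ∫ z, f z ∂ν| ∂ν < ε := by
  have hf : MemLp f 2 ν := .of_bound f.continuous.aestronglyMeasurable ‖f‖
    (.of_forall f.norm_coe_le_norm)
  exact ((eventually_ne_atTop 0).and
    ((tendsto_integral_norm_birkhoffAverage_sub_integral hErg hf).eventually_lt_const hε)).exists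

theorem IsLogGeneric.tendsto_logMean_abs_cesaroMean_sub [OpensMeasurableSpace X]
    (hx : IsLogGeneric T x ν) (hT : Continuous T) (hErg : Ergodic T ν) (f : X →ᵇ ℝ) :
    Tendsto (logMean fun N => |cesaroMean (fun n => f (T^[n] x)) N - ∫ y, f y ∂ν|)
      atTop (𝓝 0) := by
  refine tendsto_order.2 ⟨fun b hb => .of_forall fun N =>
    hb.trans_le (logMean_nonneg (fun _ => abs_nonneg _) N), fun ε hε => ?_⟩
  obtain ⟨H, hH, hHε⟩ := exists_integral_abs_birkhoffAverage_sub_lt hErg f (half_pos hε)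
  obtain ⟨F, hF⟩ := exists_boundedContinuousFunction_eq_birkhoffAverage hT f H
  have hmain := hx |F - BoundedContinuousFunction.const X (∫ y, f y ∂ν)|
  have herror := tendsto_logMean_zero <| (tendsto_zero_iff_abs_tendsto_zero _).1
    (tendsto_cesaroMean_birkhoffAverage_sub (T := T) f.isBounded_range hH x)
  rw [← hF] at hHε herror
  have hlt : 2 * ∫ y, |F y - ∫ z, f z ∂ν| ∂ν + 0 < ε := by linarith
  filter_upwards [((hmain.const_mul 2).add herror).eventually_lt_const hlt] with N hN
  exact (logMean_abs_cesaroMean_sub_le _ _ _ N).trans_lt hN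

theorem IsLogGeneric.exists_tendsto_logDensityOne [OpensMeasurableSpace X]
    {ν : ProbabilityMeasure X} (hx : IsLogGeneric T x ν) (hT : Continuous T)
    (hErg : Ergodic T (ν : Measure X)) :
    ∃ μ : ℕ → ProbabilityMeasure X,
      (∀ N ≠ 0, ∀ f : X →ᵇ ℝ, ∫ y, f y ∂(μ N) = cesaroMean (fun n => f (T^[n] x)) N) ∧
        Tendsto μ logDensityOne (𝓝 ν) := by
  have : Nonempty (ProbabilityMeasure X) := ⟨ν⟩
  choose! μ hμ using fun N (hN : N ≠ 0) =>
    exists_probabilityMeasure_integral_eq_cesaroMean (fun n => T^[n] x) hN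
  refine ⟨μ, hμ, ProbabilityMeasure.tendsto_iff_forall_integral_tendsto.2 fun f => ?_⟩
  have hlim := tendsto_logDensityOne_zero (fun _ => abs_nonneg _)
    (hx.tendsto_logMean_abs_cesaroMean_sub hT hErg f)
  refine (tendsto_sub_nhds_zero_iff.1 ((tendsto_zero_iff_abs_tendsto_zero _).2 hlim)).congr' ?_
  filter_upwards [logDensityOne_le_atTop (eventually_ne_atTop 0)] with N hN
  exact (hμ N hN f).symm

theorem log_generic_ergodic_implies_generic_along_log_density_one_general
    [PseudoMetrizableSpace X] [SeparableSpace X] [OpensMeasurableSpace X]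
    (hT : Continuous T) (hErg : Ergodic T ν) (hx : IsLogGeneric T x ν) :
    ∃ A : Set ℕ, Tendsto (logMean (A.indicator 1)) atTop (𝓝 1) ∧
      ∀ f : X →ᵇ ℝ, Tendsto (cesaroMean fun n => f (T^[n] x)) (atTop ⊓ 𝓟 A)
        (𝓝 (∫ y, f y ∂ν)) := by
  let P : ProbabilityMeasure X := ⟨ν, inferInstance⟩
  obtain ⟨μ, hμ, hlim⟩ := IsLogGeneric.exists_tendsto_logDensityOne (ν := P) hx hT hErg
  obtain ⟨A, hA, hAlim⟩ := exists_mem_logDensityOne_tendsto hlim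
  refine ⟨A, tendsto_logMean_indicator_one hA, fun f => ?_⟩
  refine (ProbabilityMeasure.tendsto_iff_forall_integral_tendsto.1 hAlim f).congr' ?_
  filter_upwards [(eventually_ne_atTop 0).filter_mono inf_le_left] with N hN using hμ N hN f

end Generic

/-- If `x` is logarithmically generic for an ergodic `T`-invariant Borel probability
measure `ν` (i.e. the logarithmic empirical measures converge to `ν` in the weak-*
topology, expressed by testing against continuous functions), then there is a set
`A ⊆ ℕ` of logarithmic density `1` such that the (Cesàro) empirical measures converge
to `ν` along `N ∈ A`. -/
theorem log_generic_ergodic_implies_generic_along_log_density_one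
    {X : Type} [MetricSpace X] [CompactSpace X] [MeasurableSpace X] [BorelSpace X]
    (T : X ≃ₜ X) (x : X) (ν : Measure X) [IsProbabilityMeasure ν]
    (hErg : Ergodic (⇑T) ν)
    (hlog : ∀ f : C(X, ℝ),
      Tendsto
        (fun N : ℕ => (1 / Real.log N) *
          ∑ n ∈ Finset.Icc 1 N, f ((⇑T)^[n] x) / n)
        atTop (nhds (∫ y, f y ∂ν))) :
    ∃ A : Set ℕ,
      Tendsto
        (fun N : ℕ => (1 / Real.log N) *
          ∑ n ∈ Finset.Icc 1 N, Set.indicator A (fun n : ℕ => (1 / n : ℝ)) n)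
        atTop (nhds 1) ∧
      ∀ f : C(X, ℝ),
        Tendsto
          (fun N : ℕ => (1 / (N : ℝ)) * ∑ n ∈ Finset.Icc 1 N, f ((⇑T)^[n] x))
          (atTop ⊓ Filter.principal A) (nhds (∫ y, f y ∂ν)) := by
  obtain ⟨A, hA, hgeneric⟩ := log_generic_ergodic_implies_generic_along_log_density_one_general
    T.continuous hErg fun f => hlog f.toContinuousMap
  exact ⟨A, hA.congr (logMean_indicator_one A), fun f => hgeneric (.mkOfCompact f)⟩
end

section
/- The following three conditions are equivalent: (i) every topological dynamical system (T,X) with h_top(T,X) = 0 is Möbius orthogonal; (ii) for every topological dynamical system (T,X) with h_top(T,X) = 0 and every continuous f : X → ℂ, (1/N) Σ_{n≤N} f(T^n x) μ(n) → 0 as N → ∞ uniformly in x ∈ X; (iii) every topological dynamical system (T,X) with h_top(T,X) = 0 satisfies the strong MOMO property. -/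
open Filter Topology

/-- `(T,X)` is Möbius orthogonal. -/
def MobiusOrthogonal {X : Type} [MetricSpace X] [CompactSpace X] (T : X ≃ₜ X) : Prop :=
  ∀ (f : C(X, ℂ)) (x : X),
    Tendsto
      (fun N : ℕ => (1 / (N : ℂ)) *
        ∑ n ∈ Finset.Icc 1 N, f ((⇑T)^[n] x) * (ArithmeticFunction.moebius n : ℂ))
      atTop (nhds 0)

/-- `(T,X)` is Möbius orthogonal uniformly in the starting point. -/
def UniformlyMobiusOrthogonal {X : Type} [MetricSpace X] [CompactSpace X]
    (T : X ≃ₜ X) : Prop :=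
  ∀ f : C(X, ℂ),
    TendstoUniformly
      (fun (N : ℕ) (x : X) => (1 / (N : ℂ)) *
        ∑ n ∈ Finset.Icc 1 N, f ((⇑T)^[n] x) * (ArithmeticFunction.moebius n : ℂ))
      (fun _ => 0) atTop

/-- `(T,X)` satisfies the strong MOMO property (with respect to the Möbius function). -/
def StrongMOMO {X : Type} [MetricSpace X] [CompactSpace X] (T : X ≃ₜ X) : Prop :=
  ∀ b : ℕ → ℕ, b 0 = 0 → StrictMono b →
    Tendsto (fun k : ℕ => b (k + 1) - b k) atTop atTop →
    ∀ (xs : ℕ → X) (f : C(X, ℂ)),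
      Tendsto
        (fun K : ℕ => (1 / (b K : ℝ)) *
          ∑ k ∈ Finset.range K,
            ‖∑ n ∈ Finset.Ico (b k) (b (k + 1)),
              f ((⇑T)^[n - b k] (xs k)) * (ArithmeticFunction.moebius n : ℂ)‖)
        atTop (nhds 0)

/-!
A pointwise statement about all zero entropy systems controls averages along arbitrary blocks
because orbit segments of one system can be stored in a single point of another. Given a zero
entropy system and blocks `[b k, b (k + 1))` with lengths tending to infinity, write on the `k`-th
block the values `ζ * f (T^[j] x_k)`, `j = 0, 1, …`, where the phase `ζ ∈ {1, I, -1, -I}` makes the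
weighted sum over the block have real part at least half its modulus. Far to the right, a window of
length `L` meets at most two blocks, so it is a splice of two orbit words; as the orbit words grow
subexponentially in number, the orbit closure of this sequence under the shift has zero entropy.
Block sums with large real part cannot cancel, so orthogonality at that one point is already the
strong MOMO property.

Conversely, suppose that the averages over some lengths `N` stay large. Choose such lengths
`b (k + 1)` so lacunary that the first `b k` terms are negligible in the sum of length `b (k + 1)`:
the blocks started at `T^[b k] x_k` then contradict the strong MOMO property.
-/

open Dynamics
open scoped Uniformity

section CoverEntropy

open ExpGrowth

variable {X : Type*} {T : X → X} {F : Set X} {U : SetRel X X}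

lemma eventually_mul_add_le_exp (a c : ℝ) {δ : ℝ} (hδ : 0 < δ) :
    ∀ᶠ n : ℕ in atTop, a * n + c ≤ Real.exp (δ * n) := by
  have hlin : (fun x : ℝ => a * x + c) =o[atTop] fun x => Real.exp (δ * x) := by
    simpa using ((isLittleO_pow_exp_pos_mul_atTop 1 hδ).const_mul_left a).add
      ((isLittleO_pow_exp_pos_mul_atTop 0 hδ).const_mul_left c)
  filter_upwards [tendsto_natCast_atTop_atTop.eventually (hlin.bound one_pos)] with n hn
  rw [one_mul, Real.norm_of_nonneg (Real.exp_pos _).le] at hn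
  exact (Real.le_norm_self _).trans hn

lemma natCast_le_ereal_exp_mul_iff {m n : ℕ} {δ : ℝ} :
    (m : ENNReal) ≤ EReal.exp (δ * n) ↔ (m : ℝ) ≤ Real.exp (δ * n) := by
  rw [show (δ : EReal) * n = ((δ * n : ℝ) : EReal) by push_cast; rfl, EReal.exp_coe,
    ← ENNReal.ofReal_natCast, ENNReal.ofReal_le_ofReal_iff (Real.exp_pos _).le]

lemma eventually_exists_isDynCoverOf_card_le_exp {δ : ℝ}
    (h : coverEntropyEntourage T F U < δ) :
    ∀ᶠ n : ℕ in atTop, ∃ s : Finset X,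
      IsDynCoverOf T F U n s ∧ (s.card : ℝ) ≤ Real.exp (δ * n) := by
  filter_upwards [eventually_le_exp h] with n hn
  have hfinite : coverMincard T F U n < ⊤ := by
    refine lt_top_iff_ne_top.2 fun htop => ?_
    rw [htop, show (δ : EReal) * n = ((δ * n : ℝ) : EReal) by push_cast; rfl,
      EReal.exp_coe] at hn
    simp at hn
  obtain ⟨s, hs, hcard⟩ := (coverMincard_finite_iff T F U n).1 hfinite
  rw [← hcard, ENat.toENNReal_coe] at hn
  exact ⟨s, hs, natCast_le_ereal_exp_mul_iff.1 hn⟩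

lemma coverEntropyEntourage_le_of_eventually_card_le_exp {δ : ℝ}
    (h : ∀ᶠ n : ℕ in atTop, ∃ s : Finset X,
      IsDynCoverOf T F U n s ∧ (s.card : ℝ) ≤ Real.exp (δ * n)) :
    coverEntropyEntourage T F U ≤ δ := by
  refine Eventually.expGrowthSup_le ?_
  filter_upwards [h] with n ⟨s, hs, hcard⟩
  have hmin : (coverMincard T F U n : ENNReal) ≤ (s.card : ENNReal) := by
    exact_mod_cast hs.coverMincard_le_card
  exact hmin.trans (natCast_le_ereal_exp_mul_iff.2 hcard)

lemma coverEntropyEntourage_comp_le_of_card_le_exp [U.IsSymm] (hF : Set.MapsTo T F F)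
    {δ : ℝ} {n : ℕ} (hn : n ≠ 0) {s : Finset X} (hs : IsDynCoverOf T F U n s)
    (hcard : (s.card : ℝ) ≤ Real.exp (δ * n)) :
    coverEntropyEntourage T F (U.comp U) ≤ δ := by
  refine (hs.coverEntropyEntourage_le_log_card_div hF hn).trans ?_
  rw [EReal.div_le_iff_le_mul (by exact_mod_cast hn.pos) (EReal.natCast_ne_top n),
    ← EReal.log_exp (n * δ), mul_comm]
  exact ENNReal.log_monotone (natCast_le_ereal_exp_mul_iff.2 hcard)

end CoverEntropy

section Shift

variable {E : Type*}

/-- The sequence `y` read from position `m`. -/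
def shiftBy (m : ℤ) (y : ℤ → E) : ℤ → E := fun i => y (i + m)

/-- The set of all (forward and backward) shifts of the two-sided sequence `y`. -/
def shiftOrbit (y : ℤ → E) : Set (ℤ → E) := Set.range fun m => shiftBy m y

lemma shiftBy_shiftBy (m n : ℤ) (y : ℤ → E) : shiftBy m (shiftBy n y) = shiftBy (m + n) y := by
  ext i
  simp only [shiftBy, add_assoc]

/-- The left shift on two-sided sequences, a homeomorphism for the product topology. -/
def bilateralShift [TopologicalSpace E] : (ℤ → E) ≃ₜ (ℤ → E) where
  toFun := shiftBy 1
  invFun := shiftBy (-1)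
  left_inv y := by ext i; simp only [shiftBy, Int.neg_add_cancel_right]
  right_inv y := by ext i; simp only [shiftBy, Int.add_neg_cancel_right]
  continuous_toFun := by unfold shiftBy; fun_prop
  continuous_invFun := by unfold shiftBy; fun_prop

lemma bilateralShift_shiftBy [TopologicalSpace E] (m : ℤ) (y : ℤ → E) :
    bilateralShift (shiftBy m y) = shiftBy (m + 1) y := by
  rw [add_comm]
  exact shiftBy_shiftBy 1 m y

lemma bilateralShift_iterate [TopologicalSpace E] (k : ℕ) (y : ℤ → E) :
    bilateralShift^[k] y = shiftBy k y := by
  induction k with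
  | zero => ext i; simp [shiftBy]
  | succ k ih => rw [Function.iterate_succ_apply', ih, bilateralShift_shiftBy, Nat.cast_succ]

/-- The pairs of two-sided sequences whose coordinates in `[-M, M]` are pairwise `V`-close. -/
def cylinder (M : ℕ) (V : SetRel E E) : SetRel (ℤ → E) (ℤ → E) :=
  {p | ∀ i : ℤ, |i| ≤ M → (p.1 i, p.2 i) ∈ V}

instance (M : ℕ) (V : SetRel E E) [V.IsRefl] : (cylinder M V).IsRefl :=
  ⟨fun _ _ _ => V.refl _⟩

instance (M : ℕ) (V : SetRel E E) [V.IsSymm] : (cylinder M V).IsSymm :=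
  ⟨fun _ _ h i hi => V.symm (h i hi)⟩

lemma exists_cylinder_subset [UniformSpace E] {U : SetRel (ℤ → E) (ℤ → E)}
    (hU : U ∈ 𝓤 (ℤ → E)) : ∃ M : ℕ, ∃ V ∈ 𝓤 E, cylinder M V ⊆ U := by
  have hbasis := Filter.HasBasis.iInf' fun i : ℤ =>
    (𝓤 E).basis_sets.comap fun p : (ℤ → E) × (ℤ → E) => (p.1 i, p.2 i)
  rw [Pi.uniformity, hbasis.mem_iff] at hU
  obtain ⟨⟨I, V⟩, ⟨hI, hV⟩, hsub⟩ := hU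
  refine ⟨hI.toFinset.sup Int.natAbs, ⋂ i ∈ I, V i, (biInter_mem hI).2 hV, fun p hp => hsub ?_⟩
  refine Set.mem_iInter₂.2 fun i hi => Set.mem_iInter₂.1 (hp i ?_) i hi
  rw [Int.abs_eq_natAbs]
  exact_mod_cast Finset.le_sup (f := Int.natAbs) (hI.mem_toFinset.2 hi)

lemma exists_cylinder_comp_cylinder_subset [UniformSpace E] {U : SetRel (ℤ → E) (ℤ → E)}
    (hU : U ∈ 𝓤 (ℤ → E)) :
    ∃ M : ℕ, ∃ V : SetRel E E, V ∈ 𝓤 E ∧ V.IsSymm ∧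
      (cylinder M V).comp (cylinder M V) ⊆ U := by
  obtain ⟨W, hW, hWU⟩ := comp_mem_uniformity_sets hU
  obtain ⟨M, V', hV', hMV'⟩ := exists_cylinder_subset hW
  obtain ⟨V, hV, hsymm, hVV'⟩ := symm_of_uniformity hV'
  have hMV : cylinder M V ⊆ W := fun p hp => hMV' fun i hi => hVV' (hp i hi)
  exact ⟨M, V, hV, hsymm, (SetRel.comp_subset_comp hMV hMV).trans hWU⟩

/-- The finite set `t` contains, up to `V`, every word of length `L` read in `y` from a position in
`A`. Only the first `L` letters of the elements of `t` matter. -/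
def IsWordCoverOf (V : SetRel E E) (y : ℤ → E) (A : Set ℤ) (L : ℕ) (t : Finset (ℕ → E)) : Prop :=
  ∀ a ∈ A, ∃ w ∈ t, ∀ j < L, (y (a + j), w j) ∈ V

lemma mem_dynEntourage_cylinder [TopologicalSpace E] {M n : ℕ} {V : SetRel E E} {p q : ℤ → E}
    (h : ∀ i : ℤ, -M ≤ i → i < n + M → (p i, q i) ∈ V) :
    (p, q) ∈ dynEntourage bilateralShift (cylinder M V) n := by
  refine mem_dynEntourage.2 fun k hk i hi => ?_
  rw [abs_le] at hi
  simp only [bilateralShift_iterate]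
  exact h (i + k) (by lia) (by lia)

lemma IsWordCoverOf.exists_isDynCoverOf [TopologicalSpace E] {V : SetRel E E} {y : ℤ → E}
    {A : Set ℤ} {M n : ℕ} {t : Finset (ℕ → E)}
    (h : IsWordCoverOf V y {a | a + M ∈ A} (n + 2 * M) t) :
    ∃ s : Finset (ℤ → E), IsDynCoverOf bilateralShift ((shiftBy · y) '' A) (cylinder M V) n s ∧
      s.card ≤ t.card := by
  classical
  refine ⟨t.image fun w i => w (i + M).toNat, ?_, Finset.card_image_le⟩
  rintro _ ⟨m, hm, rfl⟩
  obtain ⟨w, hw, hclose⟩ := h (m - M) (by simpa using hm)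
  refine ⟨_, Finset.mem_coe.2 (Finset.mem_image_of_mem _ hw), mem_dynEntourage_cylinder ?_⟩
  intro i hi hi'
  have hpos : m - M + ((i + M).toNat : ℤ) = i + m := by lia
  simpa only [hpos] using! hclose (i + M).toNat (by lia)

lemma mapsTo_bilateralShift_image_Ici [TopologicalSpace E] (y : ℤ → E) (m : ℤ) :
    Set.MapsTo bilateralShift ((shiftBy · y) '' Set.Ici m) ((shiftBy · y) '' Set.Ici m) := by
  rintro _ ⟨k, hk, rfl⟩
  exact ⟨k + 1, hk.trans (Int.lt_succ k).le, (bilateralShift_shiftBy k y).symm⟩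

lemma shiftOrbit_eq_image_Iio_union_image_Ici (y : ℤ → E) (m : ℤ) :
    shiftOrbit y = (shiftBy · y) '' Set.Iio m ∪ (shiftBy · y) '' Set.Ici m := by
  rw [← Set.image_union, Set.Iio_union_Ici, Set.image_univ, shiftOrbit]

end Shift

section ZeroExtension

variable {E : Type*} [Zero E] (y : ℕ → E)

/-- The two-sided sequence that agrees with `y` on `ℕ` and vanishes at negative positions. -/
noncomputable def zeroExtension : ℤ → E := Function.extend Nat.cast y 0

@[simp]
lemma zeroExtension_natCast (n : ℕ) : zeroExtension y n = y n :=
  Nat.cast_injective.extend_apply y 0 n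

lemma zeroExtension_of_neg {i : ℤ} (hi : i < 0) : zeroExtension y i = 0 :=
  Function.extend_apply' _ _ _ fun ⟨n, hn⟩ => by lia

lemma exists_isWordCoverOf_zeroExtension_Iio (V : SetRel E E) [V.IsRefl] (m : ℤ) (L : ℕ) :
    ∃ t : Finset (ℕ → E), IsWordCoverOf V (zeroExtension y) (Set.Iio m) L t ∧
      t.card ≤ L + m.toNat + 1 := by
  classical
  refine ⟨insert 0 ((Finset.Ico (-L : ℤ) m).image fun a j => zeroExtension y (a + j)), ?_, ?_⟩
  · intro a ha
    rcases lt_or_ge a (-L) with hneg | hnonneg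
    · refine ⟨0, by simp, fun j hj => ?_⟩
      rw [zeroExtension_of_neg y (by lia)]
      exact V.refl 0
    · exact ⟨_, Finset.mem_insert_of_mem
        (Finset.mem_image_of_mem _ (Finset.mem_Ico.2 ⟨hnonneg, ha⟩)), fun j _ => V.refl _⟩
  · refine (Finset.card_insert_le _ _).trans (Nat.succ_le_succ (Finset.card_image_le.trans ?_))
    rw [Int.card_Ico]
    lia

/-- Words read far to the left vanish, so the number of words of length `n` is linear in `n`. -/
lemma coverEntropyEntourage_image_Iio_zeroExtension_le [TopologicalSpace E] (V : SetRel E E)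
    [V.IsRefl] (M : ℕ) (m : ℤ) :
    coverEntropyEntourage bilateralShift ((shiftBy · (zeroExtension y)) '' Set.Iio m)
      (cylinder M V) ≤ 0 := by
  refine EReal.le_of_forall_lt_iff_le.1 fun δ hδ => ?_
  refine coverEntropyEntourage_le_of_eventually_card_le_exp ?_
  filter_upwards [eventually_mul_add_le_exp 1 (2 * M + (m - M).toNat + 1)
    (by exact_mod_cast hδ : (0 : ℝ) < δ)] with n hn
  obtain ⟨t, ht, htcard⟩ :=
    exists_isWordCoverOf_zeroExtension_Iio y V (m - M) (n + 2 * M)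
  obtain ⟨s, hs, hscard⟩ := IsWordCoverOf.exists_isDynCoverOf (A := Set.Iio m)
    (M := M) (n := n) (by simpa [← lt_sub_iff_add_lt] using! ht)
  refine ⟨s, hs, le_trans ?_ hn⟩
  have hcard : (s.card : ℝ) ≤ (n + 2 * M + (m - M).toNat + 1 : ℕ) :=
    Nat.cast_le.2 (hscard.trans htcard)
  push_cast at hcard
  linarith

lemma isBounded_range_zeroExtension [Bornology E] {y : ℕ → E}
    (hy : Bornology.IsBounded (Set.range y)) : Bornology.IsBounded (Set.range (zeroExtension y)) :=
  (hy.union (Bornology.isBounded_singleton (x := 0))).subset <|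
    (Set.range_extend_subset _ _ _).trans <| Set.union_subset_union_right _ <| by
      rintro _ ⟨_, -, rfl⟩
      rfl

end ZeroExtension

section Concatenation

variable {E : Type*} {b : ℕ → ℕ} {k₀ L n : ℕ}

/-- The index `k` of the block `[b k, b (k + 1))` that contains `n`; a junk value if `n < b 0`. -/
def blockIndex (b : ℕ → ℕ) (n : ℕ) : ℕ := Nat.findGreatest (b · ≤ n) n

lemma le_blockIndex (hb : StrictMono b) {k : ℕ} (hk : b k ≤ n) : k ≤ blockIndex b n :=
  Nat.le_findGreatest (hb.le_apply.trans hk) hk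

lemma apply_blockIndex_le (hb : StrictMono b) {k : ℕ} (hk : b k ≤ n) : b (blockIndex b n) ≤ n :=
  Nat.findGreatest_spec (P := (b · ≤ n)) (hb.le_apply.trans hk) hk

lemma lt_apply_blockIndex_add_one (hb : StrictMono b) : n < b (blockIndex b n + 1) :=
  lt_of_not_ge fun h => (le_blockIndex hb h).not_gt (Nat.lt_succ_self _)

lemma blockIndex_eq (hb : StrictMono b) {k : ℕ} (hk : b k ≤ n) (hk' : n < b (k + 1)) :
    blockIndex b n = k :=
  le_antisymm (Nat.lt_succ_iff.1 (hb.lt_iff_lt.1 ((apply_blockIndex_le hb hk).trans_lt hk')))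
    (le_blockIndex hb hk)

/-- The sequence that, for each `k`, reads the word `w k` from its start on the block
`[b k, b (k + 1))`. -/
def concatBlocks (b : ℕ → ℕ) (w : ℕ → ℕ → E) (n : ℕ) : E :=
  w (blockIndex b n) (n - b (blockIndex b n))

lemma concatBlocks_apply (hb : StrictMono b) (w : ℕ → ℕ → E) {k : ℕ} (hk : b k ≤ n)
    (hk' : n < b (k + 1)) : concatBlocks b w n = w k (n - b k) := by
  rw [concatBlocks, blockIndex_eq hb hk hk']

/-- The first `ℓ` letters of `w₁`, followed by `w₂`. -/
def splice (ℓ : ℕ) (w₁ w₂ : ℕ → E) (j : ℕ) : E := if j < ℓ then w₁ j else w₂ (j - ℓ)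

lemma exists_concatBlocks_add_eq_splice (hb : StrictMono b)
    (hgap : ∀ k ≥ k₀, b k + L ≤ b (k + 1)) (w : ℕ → ℕ → E) (hn : b k₀ ≤ n) :
    ∃ k r ℓ, ℓ ≤ L ∧
      ∀ j < L, concatBlocks b w (n + j) = splice ℓ (fun j => w k (r + j)) (w (k + 1)) j := by
  set k := blockIndex b n
  have hle : b k ≤ n := apply_blockIndex_le hb hn
  have hlt : n < b (k + 1) := lt_apply_blockIndex_add_one hb
  have hnext : b (k + 1) + L ≤ b (k + 2) := hgap (k + 1) (by linarith [le_blockIndex hb hn])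
  refine ⟨k, n - b k, min L (b (k + 1) - n), min_le_left _ _, fun j hj => ?_⟩
  unfold splice
  split_ifs with hsplit
  · rw [concatBlocks_apply hb w (k := k) (by lia) (by lia)]
    congr 1
    lia
  · rw [concatBlocks_apply hb w (k := k + 1) (by lia) (by lia)]
    congr 1
    lia

/-- The analogue of `IsWordCoverOf` for the words of length `L` occurring anywhere in some sequence
of the family `w`. -/
def IsFamilyWordCoverOf {κ : Type*} (V : SetRel E E) (w : κ → ℕ → E) (L : ℕ)
    (t : Finset (ℕ → E)) : Prop :=
  ∀ k r, ∃ v ∈ t, ∀ j < L, (w k (r + j), v j) ∈ V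

lemma IsFamilyWordCoverOf.exists_isWordCoverOf_zeroExtension_concatBlocks [Zero E]
    (hb : StrictMono b)
    (hgap : ∀ k ≥ k₀, b k + L ≤ b (k + 1)) {V : SetRel E E} {w : ℕ → ℕ → E}
    {t : Finset (ℕ → E)} (ht : IsFamilyWordCoverOf V w L t) :
    ∃ t' : Finset (ℕ → E),
      IsWordCoverOf V (zeroExtension (concatBlocks b w)) (Set.Ici (b k₀ : ℤ)) L t' ∧
      t'.card ≤ (L + 1) * t.card ^ 2 := by
  classical
  refine ⟨(Finset.range (L + 1) ×ˢ t ×ˢ t).image fun p => splice p.1 p.2.1 p.2.2, ?_, ?_⟩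
  · intro a ha
    lift a to ℕ using (Int.natCast_nonneg _).trans ha
    obtain ⟨k, r, ℓ, hℓ, hsplice⟩ :=
      exists_concatBlocks_add_eq_splice hb hgap w (Int.ofNat_le.1 ha)
    obtain ⟨v₁, hv₁, hclose₁⟩ := ht k r
    obtain ⟨v₂, hv₂, hclose₂⟩ := ht (k + 1) 0
    refine ⟨splice ℓ v₁ v₂, Finset.mem_image.2 ⟨(ℓ, v₁, v₂), ?_, rfl⟩, fun j hj => ?_⟩
    · exact Finset.mk_mem_product (Finset.mem_range_succ_iff.2 hℓ) (Finset.mk_mem_product hv₁ hv₂)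
    · rw [← Nat.cast_add, zeroExtension_natCast, hsplice j hj]
      unfold splice
      split_ifs
      · exact hclose₁ j hj
      · simpa only [zero_add] using hclose₂ (j - ℓ) (by lia)
  · refine Finset.card_image_le.trans_eq ?_
    rw [Finset.card_product, Finset.card_product, Finset.card_range, sq]

end Concatenation

section SubexponentialComplexity

variable {E : Type*} [UniformSpace E]

/-- A family of sequences has subexponential complexity if, at every scale, the number of words of
length `L` occurring in the family grows subexponentially in `L`. -/
def HasSubexponentialComplexity {κ : Type*} (w : κ → ℕ → E) : Prop :=
  ∀ V ∈ 𝓤 E, ∀ δ : ℝ, 0 < δ → ∀ᶠ L : ℕ in atTop, ∃ t : Finset (ℕ → E),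
    IsFamilyWordCoverOf V w L t ∧ (t.card : ℝ) ≤ Real.exp (δ * L)

lemma hasSubexponentialComplexity_observables {X ι κ : Type*} [UniformSpace X] [Finite ι]
    {T : X → X} (hT : coverEntropy T Set.univ ≤ 0) {g : ι → X → E}
    (hg : ∀ i, UniformContinuous (g i)) (c : κ → ι) (x : κ → X) :
    HasSubexponentialComplexity fun k j => g (c k) (T^[j] (x k)) := by
  classical
  have := Fintype.ofFinite ι
  intro V hV δ hδ
  have hU : {p : X × X | ∀ i, (g i p.1, g i p.2) ∈ V} ∈ 𝓤 X := by
    simpa only [Set.ofPred_forall] using! iInter_mem.2 fun i => hg i hV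
  have hentropy := ((coverEntropyEntourage_le_coverEntropy T _ hU).trans hT).trans_lt
    (EReal.coe_pos.2 (half_pos hδ))
  filter_upwards [eventually_exists_isDynCoverOf_card_le_exp hentropy,
    eventually_mul_add_le_exp 0 (Fintype.card ι) (half_pos hδ)] with L ⟨s, hs, hcard⟩ hcardι
  refine ⟨(Finset.univ ×ˢ s).image fun p j => g p.1 (T^[j] p.2), fun k r => ?_, ?_⟩
  · obtain ⟨y, hy, hclose⟩ := hs (Set.mem_univ (T^[r] (x k)))
    refine ⟨_, Finset.mem_image_of_mem _ (Finset.mk_mem_product (Finset.mem_univ (c k)) hy),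
      fun j hj => ?_⟩
    simp only [add_comm r, Function.iterate_add_apply]
    exact mem_dynEntourage.1 hclose j hj (c k)
  · calc (((Finset.univ ×ˢ s).image fun p j => g p.1 (T^[j] p.2)).card : ℝ)
        ≤ (Fintype.card ι * s.card : ℕ) := by
          rw [Fintype.card, ← Finset.card_product]
          exact_mod_cast Finset.card_image_le
      _ ≤ Real.exp (δ / 2 * L) * Real.exp (δ / 2 * L) := by
          push_cast
          gcongr
          linarith
      _ = Real.exp (δ * L) := by rw [← Real.exp_add]; ring_nf

variable {b : ℕ → ℕ} {w : ℕ → ℕ → E} [Zero E]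

lemma HasSubexponentialComplexity.exists_coverEntropyEntourage_image_Ici_le
    (hw : HasSubexponentialComplexity w) (hb : StrictMono b)
    (hgap : Tendsto (fun k => b (k + 1) - b k) atTop atTop) {V : SetRel E E} (hV : V ∈ 𝓤 E)
    [V.IsSymm] (M : ℕ) {δ : ℝ} (hδ : 0 < δ) :
    ∃ m : ℤ, coverEntropyEntourage bilateralShift
      ((shiftBy · (zeroExtension (concatBlocks b w))) '' Set.Ici m)
      ((cylinder M V).comp (cylinder M V)) ≤ δ := by
  have hwords := (hw V hV (δ / 6) (by positivity)).and
    (eventually_mul_add_le_exp 1 1 (by positivity : 0 < δ / 6))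
  obtain ⟨n, ⟨⟨t, ht, htcard⟩, hlinear⟩, hMn⟩ := ((tendsto_add_atTop_nat (2 * M)).eventually
    hwords |>.and (eventually_ge_atTop (2 * M + 1))).exists
  obtain ⟨k₀, hk₀⟩ := eventually_atTop.1 (hgap.eventually_ge_atTop (n + 2 * M))
  obtain ⟨t', ht', ht'card⟩ := ht.exists_isWordCoverOf_zeroExtension_concatBlocks (k₀ := k₀) hb
    fun k hk => by have := hk₀ k hk; have := hb k.lt_succ_self; lia
  obtain ⟨s, hs, hscard⟩ := IsWordCoverOf.exists_isDynCoverOf (A := Set.Ici (b k₀ + M : ℤ))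
    (M := M) (n := n) (by simpa [← Set.Ici_def] using! ht')
  refine ⟨b k₀ + M, coverEntropyEntourage_comp_le_of_card_le_exp
    (mapsTo_bilateralShift_image_Ici _ _) (by lia) hs ?_⟩
  have hMn' : (2 * M + 1 : ℝ) ≤ n := by exact_mod_cast hMn
  calc (s.card : ℝ) ≤ ((n + 2 * M + 1) * t.card ^ 2 : ℕ) := by exact_mod_cast hscard.trans ht'card
    _ ≤ Real.exp (δ / 6 * (n + 2 * M : ℕ)) * Real.exp (δ / 6 * (n + 2 * M : ℕ)) ^ 2 := by
        push_cast at hlinear htcard ⊢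
        gcongr
        linarith
    _ = Real.exp (δ / 2 * (n + 2 * M)) := by
        rw [← Real.exp_nat_mul, ← Real.exp_add]
        push_cast
        ring_nf
    _ ≤ Real.exp (δ * n) := Real.exp_le_exp.2 (by nlinarith)

theorem HasSubexponentialComplexity.coverEntropy_shiftOrbit_le
    (hw : HasSubexponentialComplexity w) (hb : StrictMono b)
    (hgap : Tendsto (fun k => b (k + 1) - b k) atTop atTop) :
    coverEntropy bilateralShift (shiftOrbit (zeroExtension (concatBlocks b w))) ≤ 0 := by
  refine iSup₂_le fun U hU => EReal.le_of_forall_lt_iff_le.1 fun δ hδ => ?_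
  obtain ⟨M, V, hV, hsymm, hsub⟩ := exists_cylinder_comp_cylinder_subset hU
  have := isRefl_of_mem_uniformity hV
  obtain ⟨m, hm⟩ := hw.exists_coverEntropyEntourage_image_Ici_le hb hgap hV M (EReal.coe_pos.1 hδ)
  rw [shiftOrbit_eq_image_Iio_union_image_Ici _ m]
  refine (coverEntropyEntourage_antitone bilateralShift _ hsub).trans ?_
  beta_reduce
  rw [coverEntropyEntourage_union]
  refine max_le (LE.le.trans ?_ hδ.le) hm
  exact (coverEntropyEntourage_antitone _ _ SetRel.left_subset_comp).trans
    (coverEntropyEntourage_image_Iio_zeroExtension_le _ V M m)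

end SubexponentialComplexity

section OrbitClosure

variable {E : Type*}

lemma preimage_bilateralShift_shiftOrbit [TopologicalSpace E] (y : ℤ → E) :
    bilateralShift ⁻¹' shiftOrbit y = shiftOrbit y := by
  ext z
  constructor
  · rintro ⟨m, hm⟩
    refine ⟨m - 1, bilateralShift.injective ?_⟩
    rw [bilateralShift_shiftBy, sub_add_cancel]
    exact hm
  · rintro ⟨m, rfl⟩
    exact ⟨m + 1, (bilateralShift_shiftBy m y).symm⟩

/-- The shift acting on the orbit closure of `y`: the smallest subsystem of the full shift that
contains `y`. -/
def orbitClosureShift [TopologicalSpace E] (y : ℤ → E) :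
    closure (shiftOrbit y) ≃ₜ closure (shiftOrbit y) :=
  bilateralShift.subtype fun z => by
    rw [← Set.mem_preimage, bilateralShift.preimage_closure, preimage_bilateralShift_shiftOrbit]

lemma coe_orbitClosureShift_iterate [TopologicalSpace E] (y : ℤ → E) (n : ℕ)
    (z : closure (shiftOrbit y)) : ((orbitClosureShift y)^[n] z : ℤ → E) = shiftBy n z := by
  rw [← bilateralShift_iterate]
  exact (Function.Semiconj.iterate_right (f := Subtype.val) (fun _ => rfl) n) z

lemma coverEntropy_orbitClosureShift [UniformSpace E] (y : ℤ → E) :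
    coverEntropy (orbitClosureShift y) Set.univ = coverEntropy bilateralShift (shiftOrbit y) :=
  (coverEntropy_restrict fun z hz => (orbitClosureShift y ⟨z, hz⟩).2).trans
    (coverEntropy_closure bilateralShift.continuous)

lemma compactSpace_closure_shiftOrbit [PseudoMetricSpace E] [ProperSpace E] {y : ℤ → E}
    (hy : Bornology.IsBounded (Set.range y)) : CompactSpace (closure (shiftOrbit y)) := by
  refine isCompact_iff_compactSpace.1 ((isCompact_univ_pi fun _ : ℤ =>
    hy.isCompact_closure).closure_of_subset ?_)
  rintro _ ⟨m, rfl⟩ i -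
  exact subset_closure (Set.mem_range_self (i + m))

end OrbitClosure

section Sums

variable {X : Type*} {T : X → X} {b : ℕ → ℕ}

lemma sum_Icc_one_mul_eq_sum_range {R : Type*} [Semiring R] (u : ArithmeticFunction R)
    (y : ℕ → R) (N : ℕ) :
    ∑ n ∈ Finset.Icc 1 N, y n * u n = ∑ n ∈ Finset.range (N + 1), y n * u n := by
  rw [Finset.range_eq_Ico, Finset.sum_eq_sum_Ico_succ_bot N.succ_pos, ArithmeticFunction.map_zero,
    mul_zero, zero_add, zero_add]
  rfl

lemma exists_norm_le_two_mul_re_I_pow_mul (z : ℂ) :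
    ∃ c : Fin 4, ‖z‖ ≤ 2 * (Complex.I ^ (c : ℕ) * z).re := by
  have hz := Complex.norm_le_abs_re_add_abs_im z
  have h₀ : (Complex.I ^ 0 * z).re = z.re := by simp
  have h₁ : (Complex.I ^ 1 * z).re = -z.im := by simp
  have h₂ : (Complex.I ^ 2 * z).re = -z.re := by simp
  have h₃ : (Complex.I ^ 3 * z).re = z.im := by simp [pow_succ]
  rcases le_total |z.re| |z.im| with hle | hle
  · rcases abs_cases z.im with ⟨him, -⟩ | ⟨him, -⟩
    · exact ⟨3, show ‖z‖ ≤ 2 * (Complex.I ^ 3 * z).re by linarith⟩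
    · exact ⟨1, show ‖z‖ ≤ 2 * (Complex.I ^ 1 * z).re by linarith⟩
  · rcases abs_cases z.re with ⟨hre, -⟩ | ⟨hre, -⟩
    · exact ⟨0, show ‖z‖ ≤ 2 * (Complex.I ^ 0 * z).re by linarith⟩
    · exact ⟨2, show ‖z‖ ≤ 2 * (Complex.I ^ 2 * z).re by linarith⟩

lemma sum_norm_le_two_mul_norm_sum {ι : Type*} {s : Finset ι} {z z' : ι → ℂ}
    (h : ∀ i ∈ s, ‖z i‖ ≤ 2 * (z' i).re) : ∑ i ∈ s, ‖z i‖ ≤ 2 * ‖∑ i ∈ s, z' i‖ :=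
  calc ∑ i ∈ s, ‖z i‖ ≤ ∑ i ∈ s, 2 * (z' i).re := Finset.sum_le_sum h
    _ = 2 * (∑ i ∈ s, z' i).re := by rw [Complex.re_sum, Finset.mul_sum]
    _ ≤ 2 * ‖∑ i ∈ s, z' i‖ := by gcongr; exact Complex.re_le_norm _

lemma sum_range_sum_Ico_eq_sum_range {M : Type*} [AddCommMonoid M] {b : ℕ → ℕ} (hb₀ : b 0 = 0)
    (hb : Monotone b) (F : ℕ → M) (K : ℕ) :
    ∑ k ∈ Finset.range K, ∑ n ∈ Finset.Ico (b k) (b (k + 1)), F n =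
      ∑ n ∈ Finset.range (b K), F n := by
  induction K with
  | zero => simp [hb₀]
  | succ K ih =>
    rw [Finset.sum_range_succ, ih, Finset.range_eq_Ico, Finset.range_eq_Ico,
      Finset.sum_Ico_consecutive _ (Nat.zero_le _) (hb K.le_succ)]

lemma sum_Ico_concatBlocks_mul {R : Type*} [NonUnitalNonAssocSemiring R] (hb : StrictMono b)
    (w : ℕ → ℕ → R) (u : ℕ → R) (k : ℕ) :
    ∑ n ∈ Finset.Ico (b k) (b (k + 1)), concatBlocks b w n * u n =
      ∑ n ∈ Finset.Ico (b k) (b (k + 1)), w k (n - b k) * u n :=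
  Finset.sum_congr rfl fun n hn => by
    rw [concatBlocks_apply hb w (Finset.mem_Ico.1 hn).1 (Finset.mem_Ico.1 hn).2]

lemma sum_Ico_iterate_sub_mul {R : Type*} [NonUnitalNonAssocRing R] (f : X → R) (u : ℕ → R)
    (x : X) {m n : ℕ} (hmn : m ≤ n) :
    ∑ i ∈ Finset.Ico m n, f (T^[i - m] (T^[m] x)) * u i =
      ∑ i ∈ Finset.range n, f (T^[i] x) * u i - ∑ i ∈ Finset.range m, f (T^[i] x) * u i := by
  rw [← Finset.sum_Ico_eq_sub _ hmn]
  refine Finset.sum_congr rfl fun i hi => ?_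
  rw [← Function.iterate_add_apply, Nat.sub_add_cancel (Finset.mem_Ico.1 hi).1]

lemma tendstoUniformly_average_of_norm_sum_range_le {u : ArithmeticFunction ℂ} {f : X → ℂ}
    (h : ∀ ε : ℝ, 0 < ε → ∀ᶠ N : ℕ in atTop, ∀ x,
      ‖∑ n ∈ Finset.range N, f (T^[n] x) * u n‖ ≤ ε * N) :
    TendstoUniformly
      (fun (N : ℕ) (x : X) => (1 / (N : ℂ)) * ∑ n ∈ Finset.Icc 1 N, f (T^[n] x) * u n)
      (fun _ => 0) atTop := by
  refine Metric.tendstoUniformly_iff.2 fun ε hε => ?_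
  filter_upwards [(tendsto_add_atTop_nat 1).eventually (h (ε / 4) (by positivity)),
    eventually_ge_atTop 1] with N hN hN₁ x
  have hN₁' : (1 : ℝ) ≤ N := by exact_mod_cast hN₁
  rw [dist_zero_left, norm_mul, norm_div, norm_one, Complex.norm_natCast, one_div_mul_eq_div,
    div_lt_iff₀ (by positivity), sum_Icc_one_mul_eq_sum_range u fun n => f (T^[n] x)]
  refine (hN x).trans_lt ?_
  push_cast
  nlinarith

lemma exists_lacunary_of_frequently {P : ℕ → Prop} (hP : ∃ᶠ N in atTop, P N) (R : ℕ → ℕ) :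
    ∃ b : ℕ → ℕ, b 0 = 0 ∧ StrictMono b ∧ Tendsto (fun k => b (k + 1) - b k) atTop atTop ∧
      ∀ k, R (b k) ≤ b (k + 1) ∧ P (b (k + 1)) := by
  choose next hnext hPnext using frequently_atTop.1 hP
  let b (k : ℕ) : ℕ := Nat.rec 0 (fun _ m => next (max (R m) (2 * m + 1))) k
  have hb (k : ℕ) : max (R (b k)) (2 * b k + 1) ≤ b (k + 1) := hnext _
  have hmono : StrictMono b := strictMono_nat_of_lt_succ fun k => by
    linarith [le_of_max_le_right (hb k)]
  refine ⟨b, rfl, hmono, tendsto_atTop_mono (fun k => ?_) tendsto_id,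
    fun k => ⟨le_of_max_le_left (hb k), hPnext _⟩⟩
  have := le_of_max_le_right (hb k)
  have := hmono.le_apply (x := k)
  simp only [id]
  lia

end Sums

section Orthogonality

open Asymptotics

variable {X : Type*} [TopologicalSpace X] (u : ArithmeticFunction ℂ) (T : X → X)

/-- Orthogonality of the system `(T, X)` to `u`; Möbius orthogonality is the case `u = μ`. -/
def OrthogonalTo : Prop :=
  ∀ (f : C(X, ℂ)) (x : X),
    Tendsto (fun N : ℕ => (1 / (N : ℂ)) * ∑ n ∈ Finset.Icc 1 N, f (T^[n] x) * u n) atTop (𝓝 0)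

/-- Orthogonality of the system `(T, X)` to `u`, uniformly in the starting point. -/
def UniformlyOrthogonalTo : Prop :=
  ∀ f : C(X, ℂ),
    TendstoUniformly
      (fun (N : ℕ) (x : X) => (1 / (N : ℂ)) * ∑ n ∈ Finset.Icc 1 N, f (T^[n] x) * u n)
      (fun _ => 0) atTop

/-- The strong MOMO property of `(T, X)` with respect to `u` instead of `μ`. -/
def StrongMOMOFor : Prop :=
  ∀ b : ℕ → ℕ, b 0 = 0 → StrictMono b →
    Tendsto (fun k : ℕ => b (k + 1) - b k) atTop atTop →
    ∀ (xs : ℕ → X) (f : C(X, ℂ)),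
      Tendsto
        (fun K : ℕ => (1 / (b K : ℝ)) *
          ∑ k ∈ Finset.range K,
            ‖∑ n ∈ Finset.Ico (b k) (b (k + 1)), f (T^[n - b k] (xs k)) * u n‖)
        atTop (𝓝 0)

variable {u} {T}

lemma UniformlyOrthogonalTo.orthogonalTo (h : UniformlyOrthogonalTo u T) : OrthogonalTo u T :=
  fun f x => (h f).tendsto_at x

lemma OrthogonalTo.isLittleO (h : OrthogonalTo u T) (f : C(X, ℂ)) (x : X) :
    (fun N => ∑ n ∈ Finset.range N, f (T^[n] x) * u n) =o[atTop] fun N => (N : ℝ) := by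
  have hIcc : (fun N => ∑ n ∈ Finset.Icc 1 N, f (T^[n] x) * u n) =o[atTop] fun N => (N : ℂ) := by
    refine (isLittleO_iff_tendsto' ?_).2 ((h f x).congr fun N => by rw [one_div_mul_eq_div])
    filter_upwards [eventually_gt_atTop 0] with N hN hN'
    exact absurd hN' (Nat.cast_ne_zero.2 hN.ne')
  have hpred : (fun N : ℕ => ((N - 1 : ℕ) : ℂ)) =O[atTop] fun N => (N : ℝ) :=
    isBigO_of_le _ fun N => by simp
  refine ((hIcc.comp_tendsto (tendsto_sub_atTop_nat 1)).trans_isBigO hpred).congr' ?_ .rfl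
  filter_upwards [eventually_ge_atTop 1] with N hN
  rw [Function.comp_apply, sum_Icc_one_mul_eq_sum_range, Nat.sub_add_cancel hN]

lemma isLittleO_sum_mul_of_coverEntropy_shiftOrbit_le
    (h : ∀ (X : Type) [MetricSpace X] [CompactSpace X] (T : X ≃ₜ X),
      coverEntropy T Set.univ = 0 → OrthogonalTo u T)
    {y : ℕ → ℂ} (hy : Bornology.IsBounded (Set.range y))
    (hentropy : coverEntropy bilateralShift (shiftOrbit (zeroExtension y)) ≤ 0) :
    (fun N => ∑ n ∈ Finset.range N, y n * u n) =o[atTop] fun N => (N : ℝ) := by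
  set z := zeroExtension y with hz
  let z₀ : closure (shiftOrbit z) := ⟨z, subset_closure ⟨0, funext fun i => by simp [shiftBy]⟩⟩
  have hzero : coverEntropy (orbitClosureShift z) Set.univ = 0 :=
    ((coverEntropy_orbitClosureShift z).trans_le hentropy).antisymm
      (coverEntropy_nonneg _ ⟨z₀, Set.mem_univ _⟩)
  have := compactSpace_closure_shiftOrbit (isBounded_range_zeroExtension hy)
  let _ := UniformSpace.metricSpace (closure (shiftOrbit z))
  let zeroth : C(closure (shiftOrbit z), ℂ) :=
    ⟨fun p => p.1 0, (continuous_apply 0).comp continuous_subtype_val⟩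
  have hread (n : ℕ) : zeroth ((orbitClosureShift z)^[n] z₀) = y n := by
    simp [zeroth, z₀, coe_orbitClosureShift_iterate, shiftBy, hz]
  simpa only [hread] using (h _ (orbitClosureShift z) hzero).isLittleO zeroth z₀

theorem strongMOMOFor_of_forall_orthogonalTo
    (h : ∀ (X : Type) [MetricSpace X] [CompactSpace X] (T : X ≃ₜ X),
      coverEntropy T Set.univ = 0 → OrthogonalTo u T)
    {X : Type*} [UniformSpace X] [CompactSpace X] {T : X → X}
    (hT : coverEntropy T Set.univ ≤ 0) : StrongMOMOFor u T := by
  intro b hb₀ hb hgap xs f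
  set blockSum : ℕ → ℂ := fun k =>
    ∑ n ∈ Finset.Ico (b k) (b (k + 1)), f (T^[n - b k] (xs k)) * u n
  choose c hc using fun k => exists_norm_le_two_mul_re_I_pow_mul (blockSum k)
  let w (k j : ℕ) : ℂ := Complex.I ^ (c k : ℕ) * f (T^[j] (xs k))
  have hw : HasSubexponentialComplexity w :=
    hasSubexponentialComplexity_observables hT
      (g := fun (i : Fin 4) x => Complex.I ^ (i : ℕ) * f x)
      (fun i => CompactSpace.uniformContinuous_of_continuous (by fun_prop)) c xs
  have hbounded : Bornology.IsBounded (Set.range (concatBlocks b w)) := by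
    refine isBounded_iff_forall_norm_le.2 ⟨‖f‖, ?_⟩
    rintro _ ⟨n, rfl⟩
    simpa [concatBlocks, w] using f.norm_coe_le_norm _
  have hsum (k : ℕ) : Complex.I ^ (c k : ℕ) * blockSum k =
      ∑ n ∈ Finset.Ico (b k) (b (k + 1)), concatBlocks b w n * u n := by
    simp only [sum_Ico_concatBlocks_mul hb, w, blockSum, Finset.mul_sum, mul_assoc]
  have hbound (K : ℕ) : ∑ k ∈ Finset.range K, ‖blockSum k‖ ≤
      2 * ‖∑ n ∈ Finset.range (b K), concatBlocks b w n * u n‖ := by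
    rw [← sum_range_sum_Ico_eq_sum_range hb₀ hb.monotone]
    exact sum_norm_le_two_mul_norm_sum fun k _ => hsum k ▸ hc k
  have hlittle := (isLittleO_sum_mul_of_coverEntropy_shiftOrbit_le h hbounded
    (hw.coverEntropy_shiftOrbit_le hb hgap)).comp_tendsto hb.tendsto_atTop
  have hbig : (fun K => ∑ k ∈ Finset.range K, ‖blockSum k‖) =O[atTop]
      ((fun N => ∑ n ∈ Finset.range N, concatBlocks b w n * u n) ∘ b) :=
    .of_bound 2 <| .of_forall fun K => by
      rw [Real.norm_of_nonneg (Finset.sum_nonneg fun _ _ => norm_nonneg _)]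
      exact hbound K
  exact (hbig.trans_isLittleO hlittle).tendsto_div_nhds_zero.congr fun K =>
    (one_div_mul_eq_div _ _).symm

lemma norm_sum_range_mul_le [CompactSpace X] (u : ℕ → ℂ) (T : X → X) (f : C(X, ℂ)) (N : ℕ)
    (x : X) :
    ‖∑ n ∈ Finset.range N, f (T^[n] x) * u n‖ ≤ ‖f‖ * ∑ n ∈ Finset.range N, ‖u n‖ := by
  rw [Finset.mul_sum]
  refine norm_sum_le_of_le _ fun n _ => ?_
  rw [norm_mul]
  gcongr
  exact f.norm_coe_le_norm _

theorem StrongMOMOFor.uniformlyOrthogonalTo [CompactSpace X] (h : StrongMOMOFor u T) :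
    UniformlyOrthogonalTo u T := by
  refine fun f => tendstoUniformly_average_of_norm_sum_range_le ?_
  by_contra! ⟨ε, hε, hlarge⟩
  obtain ⟨b, hb₀, hb, hgap, hnext⟩ := exists_lacunary_of_frequently hlarge
    fun m => ⌈‖f‖ * (∑ n ∈ Finset.range m, ‖u n‖) / (ε / 2)⌉₊
  choose hlacunary x hx using hnext
  have hblock (k : ℕ) : ε / 2 * b (k + 1) ≤
      ‖∑ n ∈ Finset.Ico (b k) (b (k + 1)), f (T^[n - b k] (T^[b k] (x k))) * u n‖ := by
    have hhead : ‖∑ n ∈ Finset.range (b k), f (T^[n] (x k)) * u n‖ ≤ ε / 2 * b (k + 1) :=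
      (norm_sum_range_mul_le u T f (b k) (x k)).trans
        ((div_le_iff₀' (half_pos hε)).1 (Nat.ceil_le.1 (hlacunary k)))
    rw [sum_Ico_iterate_sub_mul f u _ (hb k.lt_succ_self).le]
    linarith [norm_sub_norm_le (∑ n ∈ Finset.range (b (k + 1)), f (T^[n] (x k)) * u n)
      (∑ n ∈ Finset.range (b k), f (T^[n] (x k)) * u n), hx k]
  have hlimit := (tendsto_add_atTop_iff_nat 1).2 (h b hb₀ hb hgap (fun k => T^[b k] (x k)) f)
  refine (half_pos hε).not_ge (ge_of_tendsto' hlimit fun k => ?_)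
  have hpos : (0 : ℝ) < b (k + 1) := Nat.cast_pos.2 ((Nat.zero_le _).trans_lt (hb k.lt_succ_self))
  rw [one_div_mul_eq_div, le_div_iff₀ hpos]
  exact (hblock k).trans (Finset.single_le_sum (f := fun k => ‖∑ n ∈ Finset.Ico (b k) (b (k + 1)),
    f (T^[n - b k] (T^[b k] (x k))) * u n‖) (fun _ _ => norm_nonneg _)
    (Finset.self_mem_range_succ k))

end Orthogonality

theorem sarnak_uniform_sarnak_strong_MOMO_equivalent_general (u : ArithmeticFunction ℂ) :
    List.TFAE [
      ∀ (X : Type) [MetricSpace X] [CompactSpace X] (T : X ≃ₜ X),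
        Dynamics.coverEntropy (⇑T) Set.univ = 0 → OrthogonalTo u T,
      ∀ (X : Type) [MetricSpace X] [CompactSpace X] (T : X ≃ₜ X),
        Dynamics.coverEntropy (⇑T) Set.univ = 0 → UniformlyOrthogonalTo u T,
      ∀ (X : Type) [MetricSpace X] [CompactSpace X] (T : X ≃ₜ X),
        Dynamics.coverEntropy (⇑T) Set.univ = 0 → StrongMOMOFor u T] := by
  tfae_have 1 → 3 := fun h _ _ _ _ hT => strongMOMOFor_of_forall_orthogonalTo h hT.le
  tfae_have 3 → 2 := fun h X _ _ T hT => (h X T hT).uniformlyOrthogonalTo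
  tfae_have 2 → 1 := fun h X _ _ T hT => (h X T hT).orthogonalTo
  tfae_finish

/-- The following are equivalent: (i) every zero entropy system is Möbius orthogonal
(Sarnak's conjecture); (ii) every zero entropy system is uniformly Möbius orthogonal;
(iii) every zero entropy system satisfies the strong MOMO property. -/
theorem sarnak_uniform_sarnak_strong_MOMO_equivalent :
    ((∀ (X : Type) [MetricSpace X] [CompactSpace X] (T : X ≃ₜ X),
        Dynamics.coverEntropy (⇑T) Set.univ = 0 → MobiusOrthogonal T) ↔
      (∀ (X : Type) [MetricSpace X] [CompactSpace X] (T : X ≃ₜ X),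
        Dynamics.coverEntropy (⇑T) Set.univ = 0 → UniformlyMobiusOrthogonal T)) ∧
    ((∀ (X : Type) [MetricSpace X] [CompactSpace X] (T : X ≃ₜ X),
        Dynamics.coverEntropy (⇑T) Set.univ = 0 → UniformlyMobiusOrthogonal T) ↔
      (∀ (X : Type) [MetricSpace X] [CompactSpace X] (T : X ≃ₜ X),
        Dynamics.coverEntropy (⇑T) Set.univ = 0 → StrongMOMO T)) :=
  let μ : ArithmeticFunction ℂ := (ArithmeticFunction.moebius : ArithmeticFunction ℤ)
  ⟨(sarnak_uniform_sarnak_strong_MOMO_equivalent_general μ).out 0 1,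
    (sarnak_uniform_sarnak_strong_MOMO_equivalent_general μ).out 1 2⟩
end
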